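/- Let (X,d) be a finite metric space with n points, t > 0, and ζ_t : X × X → ℝ the matrix ζ_t(x,y) = exp(−t·d(x,y)). If ζ_t is invertible, then the magnitude |tX| = ∑_{x,y ∈ X} ζ_t⁻¹(x,y) satisfies: |tX| = ∑_{k=0}^{n-1} ∑_{γ} (-1)^k · ( det(ζ_t restricted to X ∖ range(γ)) / det ζ_t ) · ∏_{i=0}^{k-1} exp(−t·d(γ_i, γ_{i+1})), where the inner sum ranges over all injective sequences γ = (γ_0, γ_1, …, γ_k) of points of X (k-paths), ζ_t restricted to a subset S ⊆ X is the submatrix (ζ_t(x,y))_{x,y ∈ S}, the empty product (case k = 0) equals 1, and the determinant of the empty matrix equals 1. -/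

import Mathlib

attribute [local instance] Classical.propDecidable

namespace Matrix

variable {X R : Type*} [Fintype X] [CommRing R]

/-- If the off-diagonal entries of row `x` vanish, the determinant does not depend on the
off-diagonal entries of column `x`. -/
theorem det_eq_of_row_eq_zero {M N : Matrix X X R} (x : X) (hM : ∀ j, j ≠ x → M x j = 0)
    (hdiag : M x x = N x x) (hcol : ∀ i j, j ≠ x → M i j = N i j) : M.det = N.det := by
  rw [det_apply, det_apply]
  refine Finset.sum_congr rfl fun σ _ => ?_
  congr 1
  by_cases hσ : σ x = x
  · refine Finset.prod_congr rfl fun i _ => ?_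
    by_cases hi : i = x
    · rw [hi, hσ, hdiag]
    · exact hcol _ _ hi
  · have hi : σ.symm x ≠ x := fun h => hσ (by rw [← h]; simpa using h.symm)
    have h0 : M (σ (σ.symm x)) (σ.symm x) = 0 := by simpa using hM _ hi
    exact (Finset.prod_eq_zero (f := fun i => M (σ i) i) (Finset.mem_univ _) h0).trans
      (Finset.prod_eq_zero (f := fun i => N (σ i) i) (Finset.mem_univ _)
        ((hcol _ _ hi).symm.trans h0)).symm

/-- The matrix `A` with every row indexed by `T` replaced by that row of the identity. -/
noncomputable def idRows (A : Matrix X X R) (T : Set X) : Matrix X X R :=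
  of fun i j => if i ∈ T then (1 : Matrix X X R) i j else A i j

/-- The Cramer numerator at `x` of the linear system `A w = 1` restricted to the complement
of `T`. -/
noncomputable def weightNumerator (A : Matrix X X R) (T : Set X) (x : X) : R :=
  ((A.idRows T).updateCol x fun i => if i ∈ T then 0 else 1).det

theorem det_idRows (A : Matrix X X R) (T : Set X) :
    (A.idRows T).det = (of fun x y : {v : X // v ∉ T} => A x.1 y.1).det := by
  rw [twoBlockTriangular_det' _ (· ∈ T)]
  · have h1 : (A.idRows T).toSquareBlockProp (· ∈ T) = 1 := by
      ext i j
      simp [toSquareBlockProp, idRows, one_apply, Subtype.ext_iff]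
    have h2 : (A.idRows T).toSquareBlockProp (fun i => ¬ i ∈ T) =
        of fun x y : {v : X // v ∉ T} => A x.1 y.1 := by
      ext i j
      simp [toSquareBlockProp, idRows, i.2]
    rw [h1, h2, det_one, one_mul]
  · intro i hi j hj
    have : i ≠ j := fun h => hj (h ▸ hi)
    simp [idRows, hi, one_apply, this]

theorem weightNumerator_eq (A : Matrix X X R) {S T : Set X} {x : X} (hx : x ∉ T)
    (hS : S = insert x T) :
    A.weightNumerator T x = (A.idRows S).det -
      ∑ z, if z ∈ S then 0 else A x z * A.weightNumerator S z := by
  have hxS : x ∈ S := hS ▸ Set.mem_insert x T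
  rw [weightNumerator, det_eq_sum_mul_adjugate_row _ x,
    ← Finset.add_sum_erase _ _ (Finset.mem_univ x),
    ← Finset.add_sum_erase _ (fun z => if z ∈ S then 0 else _) (Finset.mem_univ x),
    if_pos hxS, zero_add, sub_eq_add_neg, ← Finset.sum_neg_distrib]
  simp only [adjugate_apply]
  subst hS
  congr 1
  · rw [updateCol_self, if_neg hx, one_mul]
    refine det_eq_of_row_eq_zero x ?_ ?_ ?_
    · intro j hj
      simp [hj]
    · simp [idRows]
    · intro i j hj
      by_cases hi : i = x
      · subst hi
        simp [idRows, hj, hj.symm]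
      · simp [updateRow_apply, idRows, hi, hj]
  · refine Finset.sum_congr rfl fun z hz => ?_
    have hzx : z ≠ x := Finset.ne_of_mem_erase hz
    by_cases hzT : z ∈ T
    · rw [if_pos (Set.mem_insert_of_mem x hzT), neg_zero,
        det_zero_of_row_eq (i := x) (j := z) hzx.symm, mul_zero]
      ext j
      by_cases hj : j = x
      · subst hj
        simp [updateRow_apply, hzT, hzx, hzx.symm]
      · simp [updateRow_apply, idRows, hzT, hzx, hj, one_apply, Pi.single_apply,
          eq_comm]
    · have hz' : z ∉ insert x T := by simp [hzx, hzT]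
      rw [if_neg hz', updateCol_ne hzx, idRows, of_apply, if_neg hx, ← mul_neg]
      congr 1
      rw [← neg_eq_iff_eq_neg]
      have hswap := det_permute' (Equiv.swap x z)
        (((A.idRows T).updateCol x fun i => if i ∈ T then 0 else 1).updateRow x (Pi.single z 1))
      rw [Equiv.Perm.sign_swap hzx.symm] at hswap
      simp only [Units.val_neg, Units.val_one, Int.cast_neg, Int.cast_one, neg_one_mul] at hswap
      change -det (((A.idRows T).updateCol x fun i => if i ∈ T then 0 else 1).updateRow x
        (Pi.single z 1)) = _
      rw [← hswap, weightNumerator]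
      refine det_eq_of_row_eq_zero x ?_ ?_ ?_
      · intro j hj
        have : Equiv.swap x z j ≠ z := by
          rw [Ne, Equiv.swap_apply_eq_iff, Equiv.swap_apply_right]
          exact hj
        simp [this]
      · simp [idRows, hzx.symm]
      · intro i j hj
        by_cases hjz : j = z
        · subst hjz
          by_cases hi : i = x
          · subst hi
            simp [hj.symm]
          · simp [updateRow_apply, hi]
        · rw [submatrix_apply, Equiv.swap_apply_of_ne_of_ne hj hjz]
          by_cases hi : i = x
          · subst hi
            simp [idRows, hj.symm, hjz, one_apply]
          · simp [updateRow_apply, idRows, hi, hj, hjz]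

theorem sum_adjugate_row (A : Matrix X X R) (x : X) :
    ∑ y, A.adjugate x y = A.weightNumerator ∅ x := by
  have h := congrFun (cramer_eq_adjugate_mulVec A fun _ => 1) x
  rw [cramer_apply] at h
  have h0 : A.idRows ∅ = A := by
    ext i j
    simp [idRows]
  simpa [weightNumerator, h0, mulVec, dotProduct] using h.symm

end Matrix

theorem Fin.range_eq_insert_last {α : Type*} {m : ℕ} (γ : Fin (m + 1) → α) :
    Set.range γ = insert (γ (Fin.last m)) (Set.range (Fin.init γ : Fin m → α)) := by
  ext a
  simp [Fin.exists_fin_succ', Fin.init, eq_comm, or_comm]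

namespace Matrix

variable {X R : Type*} [Fintype X] [CommRing R]

/-- Partial path expansion of the entry sum of the adjugate, with its remainder. -/
theorem sum_adjugate_eq_paths_add (A : Matrix X X R) (m : ℕ) :
    ∑ x, ∑ y, A.adjugate x y =
      (∑ k ∈ Finset.range m, ∑ γ : Fin (k + 1) → X with Function.Injective γ,
        (-1) ^ k * (A.idRows (Set.range γ)).det * ∏ i : Fin k, A (γ i.castSucc) (γ i.succ)) +
      ∑ γ : Fin (m + 1) → X with Function.Injective γ,
        (-1) ^ m * A.weightNumerator (Set.range (Fin.init γ : Fin m → X)) (γ (Fin.last m)) *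
          ∏ i : Fin m, A (γ i.castSucc) (γ i.succ) := by
  induction m with
  | zero =>
    simp only [sum_adjugate_row, Finset.range_zero, Finset.sum_empty, zero_add]
    rw [Finset.filter_true_of_mem fun γ _ i j _ => Subsingleton.elim (α := Fin 1) i j,
      ← (Equiv.funUnique (Fin 1) X).symm.sum_comp]
    refine Finset.sum_congr rfl fun x _ => ?_
    simp [Set.range_eq_empty]
  | succ m ih =>
    rw [ih, Finset.sum_range_succ, add_assoc, add_right_inj]
    rw [Finset.sum_filter (s := (Finset.univ : Finset (Fin (m + 1 + 1) → X))),
      ← (Fin.snocEquiv fun _ : Fin (m + 1 + 1) => X).sum_comp, Fintype.sum_prod_type_right,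
      Finset.sum_filter, Finset.sum_filter, ← Finset.sum_add_distrib]
    refine Finset.sum_congr rfl fun γ _ => ?_
    have hsnoc : ∀ z : X, (Fin.snocEquiv fun _ : Fin (m + 1 + 1) => X) (z, γ) =
        (Fin.snoc γ z : Fin (m + 1 + 1) → X) := fun _ => rfl
    simp only [hsnoc, Fin.snoc_injective_iff, Fin.init_snoc, Fin.snoc_last]
    by_cases hγ : Function.Injective γ
    · have hlast : γ (Fin.last m) ∉ Set.range (Fin.init γ : Fin m → X) := by
        rintro ⟨i, hi⟩
        exact (Fin.castSucc_lt_last i).ne (hγ hi)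
      simp only [hγ, true_and, if_true]
      rw [weightNumerator_eq A hlast (Fin.range_eq_insert_last γ), mul_sub, sub_mul,
        sub_eq_add_neg, add_right_inj, Finset.mul_sum, Finset.sum_mul, ← Finset.sum_neg_distrib]
      refine Finset.sum_congr rfl fun z _ => ?_
      by_cases hz : z ∈ Set.range γ
      · rw [if_pos hz, if_neg (not_not.mpr hz), mul_zero, zero_mul, neg_zero]
      · rw [if_neg hz, if_pos hz, Fin.prod_univ_castSucc]
        simp only [Fin.succ_castSucc, Fin.snoc_castSucc, Fin.succ_last, Fin.snoc_last]
        ring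
    · simp [hγ]

theorem sum_adjugate_eq_paths (A : Matrix X X R) :
    ∑ x, ∑ y, A.adjugate x y =
      ∑ k ∈ Finset.range (Fintype.card X), ∑ γ : Fin (k + 1) → X with Function.Injective γ,
        (-1) ^ k * (of fun x y : {v : X // v ∉ Set.range γ} => A x.1 y.1).det *
          ∏ i : Fin k, A (γ i.castSucc) (γ i.succ) := by
  rw [sum_adjugate_eq_paths_add A (Fintype.card X), Finset.filter_false_of_mem
    (s := (Finset.univ : Finset (Fin (Fintype.card X + 1) → X))), Finset.sum_empty, add_zero]
  · refine Finset.sum_congr rfl fun k _ => Finset.sum_congr rfl fun γ _ => ?_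
    rw [det_idRows]
    congr!
  · intro γ _ hγ
    have := Fintype.card_le_of_injective γ hγ
    simp at this

end Matrix

theorem stmt12 {X : Type*} [MetricSpace X] [Fintype X] (t : ℝ) (ht : 0 < t)
    (hinv : IsUnit (Matrix.of fun x y : X => Real.exp (-t * dist x y)).det) :
    ∑ x : X, ∑ y : X, (Matrix.of fun x y : X => Real.exp (-t * dist x y))⁻¹ x y =
      ∑ k ∈ Finset.range (Fintype.card X),
        ∑ γ ∈ Finset.univ.filter (fun γ : Fin (k + 1) → X => Function.Injective γ),
          (-1 : ℝ) ^ k *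
            ((Matrix.of fun x y : {v : X // v ∉ Set.range γ} =>
                Real.exp (-t * dist x.1 y.1)).det /
              (Matrix.of fun x y : X => Real.exp (-t * dist x y)).det) *
            ∏ i : Fin k, Real.exp (-t * dist (γ i.castSucc) (γ i.succ)) := by
  rw [Matrix.inv_def]
  simp only [Matrix.smul_apply, smul_eq_mul, ← Finset.mul_sum]
  rw [Matrix.sum_adjugate_eq_paths, Finset.mul_sum]
  refine Finset.sum_congr rfl fun k _ => ?_
  rw [Finset.mul_sum]
  refine Finset.sum_congr rfl fun γ _ => ?_
  rw [Ring.inverse_eq_inv']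
  simp only [Matrix.of_apply]
  ring
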